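/- arXiv:1711.01827 — 2 statements merged into one kernel-verified Lean document; each statement's English description precedes it below -/
import Mathlib

section
/- Let r ≥ 1 and let k_1, …, k_r be integers with k_i ≥ 2 for every i. Then Σ_{σ ∈ S_r} ζ*(k_{σ(1)}, …, k_{σ(r)}) = Σ_{Π ∈ P(r)} c̄(Π) · ∏_{P ∈ Π} ζ(Σ_{p ∈ P} k_p), where S_r is the symmetric group on {1,…,r}. (This is the shuffle symmetric-sum theorem for multiple zeta-star values in the convergent case, where regularized values coincide with the actual values and the characteristic factors are all 1.) -/
open Finset

open scoped Classical

/-- The Riemann zeta value `ζ(m) = Σ_{n ≥ 1} 1/n^m`. -/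
noncomputable def zetaVal (m : ℕ) : ℝ := ∑' n : ℕ, 1 / ((n : ℝ) + 1) ^ m

/-- The multiple zeta-star value
`ζ*(k_1, …, k_r) = Σ_{0 < m_1 ≤ m_2 ≤ ⋯ ≤ m_r} 1/(m_1^{k_1} ⋯ m_r^{k_r})`,
where positive integers `m_i` are parametrized as `m i + 1` for `m : Fin r → ℕ` monotone. -/
noncomputable def mzsv {r : ℕ} (k : Fin r → ℕ) : ℝ :=
  ∑' m : { f : Fin r → ℕ // Monotone f }, ∏ i : Fin r, 1 / ((m.1 i : ℝ) + 1) ^ k i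

/-- The set of partitions of a finite set `S`: sets of nonempty pairwise disjoint
subsets (blocks) of `S` whose union is `S`. -/
noncomputable def partitionsOf {α : Type*} [DecidableEq α] (S : Finset α) :
    Finset (Finset (Finset α)) :=
  S.powerset.powerset.filter (fun π =>
    (∀ P ∈ π, P.Nonempty) ∧
    (∀ P ∈ π, ∀ Q ∈ π, P ≠ Q → Disjoint P Q) ∧
    π.biUnion id = S)

/-- `c̄(Π) = ∏_{P ∈ Π} (|P| - 1)!`. -/
def cbar {α : Type*} (π : Finset (Finset α)) : ℕ :=
  ∏ P ∈ π, (P.card - 1).factorial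

/-!
Fix a tuple `f : Fin r → ℕ`. The permutations `σ` for which `f ∘ σ` is monotone form a coset of
the stabilizer `{τ | f ∘ τ = f}`, so summing the monotone tuples over all rearrangements of `k`
counts every tuple `f` once for each `τ` fixing it. Now `τ` fixes `f` exactly when `f` is constant
on the orbits of `τ`, so for fixed `τ` the sum over `f` factors into one single sum per orbit.
Finally, a set partition `Π` is the orbit partition of exactly `c̄(Π)` permutations, because a block
with `n` elements carries `(n - 1)!` cyclic permutations. This identity holds for sums over the
tuples with entries in any finite set; letting that set exhaust `ℕ` gives the theorem.
-/

open Equiv Filter Topology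

section Partitions

variable {α : Type*} [DecidableEq α]

theorem parts_mem_partitionsOf {S : Finset α} (Q : Finpartition S) :
    Q.parts ∈ partitionsOf S := by
  simp only [partitionsOf, mem_filter, mem_powerset]
  exact ⟨fun P hP => mem_powerset.2 (Q.subset hP), fun P => Q.nonempty_of_mem_parts,
    fun P hP P' hP' => Q.disjoint hP hP', Q.biUnion_parts⟩

theorem exists_parts_eq_of_mem_partitionsOf {S : Finset α} {π : Finset (Finset α)}
    (hπ : π ∈ partitionsOf S) : ∃ Q : Finpartition S, Q.parts = π := by
  simp only [partitionsOf, mem_filter] at hπ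
  obtain ⟨-, nonempty_blocks, disjoint_blocks, union_eq⟩ := hπ
  exact ⟨{
    parts := π
    supIndep := supIndep_iff_pairwiseDisjoint.2 disjoint_blocks
    sup_parts := by rw [sup_eq_biUnion, union_eq]
    bot_notMem := fun h => not_nonempty_empty (nonempty_blocks ∅ h) }, rfl⟩

theorem sum_partitionsOf {M : Type*} [AddCommMonoid M] (S : Finset α)
    (g : Finset (Finset α) → M) :
    ∑ π ∈ partitionsOf S, g π = ∑ Q : Finpartition S, g Q.parts := by
  refine (sum_bij (fun Q _ => Q.parts) (fun Q _ => parts_mem_partitionsOf Q)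
    (fun Q _ Q' _ => Finpartition.ext) (fun π hπ => ?_) fun _ _ => rfl).symm
  obtain ⟨Q, hQ⟩ := exists_parts_eq_of_mem_partitionsOf hπ
  exact ⟨Q, mem_univ Q, hQ⟩

theorem finpartition_eq_of_part_eq {S : Finset α} {Q Q' : Finpartition S}
    (h : ∀ a ∈ S, Q.part a = Q'.part a) : Q = Q' := by
  have parts_eq_image (R : Finpartition S) : (R.parts : Set (Finset α)) = R.part '' S :=
    (R.part_surjOn.image_eq_of_mapsTo fun _ ha => R.part_mem.2 ha).symm
  refine Finpartition.ext (coe_injective ?_)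
  rw [parts_eq_image, parts_eq_image, Set.image_congr h]

theorem prod_parts_prod {M : Type*} [CommMonoid M] {S : Finset α} (Q : Finpartition S)
    (g : α → M) : ∏ P ∈ Q.parts, ∏ p ∈ P, g p = ∏ p ∈ S, g p := by
  conv_rhs => rw [← Q.biUnion_parts]
  exact (prod_biUnion Q.disjoint).symm

variable [Fintype α]

theorem prod_parts_sum_prod {β R : Type*} [CommSemiring R] (Q : Finpartition (univ : Finset α))
    (s : Finset β) (F : α → β → R) :
    ∏ P ∈ Q.parts, ∑ n ∈ s, ∏ p ∈ P, F p n =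
      ∑ f ∈ Fintype.piFinset (fun _ : α => s) with Function.FactorsThrough f Q.part,
        ∏ p, F p (f p) := by
  let block (a : α) : Q.parts := ⟨Q.part a, Q.part_mem.2 (mem_univ a)⟩
  have block_eq (P : Q.parts) (a : α) (ha : a ∈ P.1) : block a = P :=
    Subtype.ext (Q.part_eq_of_mem P.2 ha)
  choose rep rep_mem using fun P : Q.parts => Q.nonempty_of_mem_parts P.2
  rw [← prod_coe_sort, prod_univ_sum]
  refine sum_nbij' (fun g a => g (block a)) (fun f P => f (rep P)) ?_ ?_ ?_ ?_ ?_
  · intro g hg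
    rw [Fintype.mem_piFinset] at hg
    exact mem_filter.2 ⟨Fintype.mem_piFinset.2 fun a => hg _,
      fun a b hab => congrArg g (Subtype.ext hab)⟩
  · intro f hf
    exact Fintype.mem_piFinset.2 fun P => Fintype.mem_piFinset.1 (mem_filter.1 hf).1 _
  · intro g _
    exact funext fun P => congrArg g (block_eq P _ (rep_mem P))
  · intro f hf
    exact funext fun a => (mem_filter.1 hf).2 (Q.part_eq_of_mem (block a).2 (rep_mem _))
  · intro g _
    rw [← prod_parts_prod Q, ← prod_coe_sort Q.parts]
    exact prod_congr rfl fun P _ => prod_congr rfl fun p hp =>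
      congrArg (F p) (congrArg g (block_eq P p hp).symm)

end Partitions

section Orbits

variable {α : Type*}

theorem isCycleOn_setOf_sameCycle (τ : Perm α) (a : α) : τ.IsCycleOn {b | τ.SameCycle a b} :=
  ⟨⟨fun _ => Perm.SameCycle.apply_right, τ.injective.injOn, fun b hb =>
      ⟨τ.symm b, Perm.SameCycle.symm_apply_right hb, τ.apply_symm_apply b⟩⟩,
    fun _ hb _ hc => hb.symm.trans hc⟩

theorem eq_setOf_sameCycle_of_isCycleOn {τ : Perm α} {s : Set α} (hs : τ.IsCycleOn s) {a : α}
    (ha : a ∈ s) : s = {b | τ.SameCycle a b} :=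
  (hs.range_zpow ha).symm

theorem isCycleOn_univ_subtypePerm_iff {τ : Perm α} {s : Set α} (h : ∀ a, τ a ∈ s ↔ a ∈ s) :
    (τ.subtypePerm h).IsCycleOn Set.univ ↔ τ.IsCycleOn s := by
  refine ⟨fun hτ => ⟨τ.bijOn h, fun a ha b hb => ?_⟩, fun hτ => hτ.subtypePerm⟩
  exact Perm.sameCycle_subtypePerm.1 (hτ.2 (Set.mem_univ ⟨a, ha⟩) (Set.mem_univ ⟨b, hb⟩))

variable [Fintype α] [DecidableEq α]

/-- The partition of a finite type into the orbits of a permutation, fixed points included as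
singleton blocks. It groups the permutations in the symmetric sum into the terms of the sum over
set partitions. -/
noncomputable def orbitPartition (τ : Perm α) : Finpartition (univ : Finset α) :=
  Finpartition.ofSetoid (Perm.SameCycle.setoid τ)

theorem coe_part_orbitPartition (τ : Perm α) (a : α) :
    ((orbitPartition τ).part a : Set α) = {b | τ.SameCycle a b} :=
  Set.ext fun _ => Finpartition.mem_part_ofSetoid_iff_rel

theorem orbitPartition_eq_iff (τ : Perm α) (Q : Finpartition (univ : Finset α)) :
    orbitPartition τ = Q ↔ ∀ P ∈ Q.parts, τ.IsCycleOn P := by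
  constructor
  · rintro rfl P hP
    obtain ⟨a, ha⟩ := Finpartition.nonempty_of_mem_parts _ hP
    rw [← Finpartition.part_eq_of_mem _ hP ha, coe_part_orbitPartition]
    exact isCycleOn_setOf_sameCycle τ a
  · intro h
    refine finpartition_eq_of_part_eq fun a ha => coe_injective ?_
    rw [coe_part_orbitPartition]
    exact (eq_setOf_sameCycle_of_isCycleOn (h _ (Q.part_mem.2 ha)) (Q.mem_part_self.2 ha)).symm

theorem factorsThrough_part_orbitPartition_iff {β : Type*} (τ : Perm α) (f : α → β) :
    Function.FactorsThrough f (orbitPartition τ).part ↔ f ∘ τ = f := by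
  have part_eq_iff (a b : α) :
      (orbitPartition τ).part a = (orbitPartition τ).part b ↔ τ.SameCycle b a := by
    rw [← Finpartition.mem_part_iff_part_eq_part _ (mem_univ a) (mem_univ b), ← mem_coe,
      coe_part_orbitPartition, Set.mem_ofPred]
  constructor
  · exact fun h => funext fun a => h ((part_eq_iff _ _).2 (Perm.SameCycle.refl τ a).apply_right)
  · intro h a b hab
    obtain ⟨n, rfl⟩ := ((part_eq_iff a b).1 hab).exists_nat_pow_eq
    have semiconj : Function.Semiconj f τ id := congrFun h
    simpa [Perm.iterate_eq_pow] using semiconj.iterate_right n b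

end Orbits

section CycleCounting

variable {α : Type*} [Fintype α] [DecidableEq α]

theorem isCycleOn_univ_iff_cycleType_eq [Nontrivial α] (τ : Perm α) :
    τ.IsCycleOn Set.univ ↔ τ.cycleType = {Fintype.card α} := by
  constructor
  · intro h
    have isCycle : τ.IsCycle :=
      Perm.isCycle_iff_exists_isCycleOn.2 ⟨_, Set.nontrivial_univ, h, fun _ _ => Set.mem_univ _⟩
    have support_eq : τ.support = univ := eq_univ_of_forall fun a =>
      Perm.mem_support.2 (h.apply_ne Set.nontrivial_univ (Set.mem_univ a))
    rw [isCycle.cycleType, support_eq, card_univ]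
  · intro h
    have isCycle : τ.IsCycle := Perm.card_cycleType_eq_one.1 (by rw [h, Multiset.card_singleton])
    have support_eq : τ.support = univ := by
      rw [← card_eq_iff_eq_univ, ← Perm.sum_cycleType, h, Multiset.sum_singleton]
    have cycleOn_support := isCycle.isCycleOn
    rwa [← Perm.coe_support_eq_set_support, support_eq, coe_univ] at cycleOn_support

theorem card_isCycleOn_univ [Nonempty α] :
    #{τ : Perm α | τ.IsCycleOn Set.univ} = (Fintype.card α - 1).factorial := by
  rcases subsingleton_or_nontrivial α with _ | _
  · have card_eq_one : Fintype.card α = 1 :=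
      (Fintype.card_le_one_iff_subsingleton.2 ‹_›).antisymm Fintype.card_pos
    simp [Perm.isCycleOn_of_subsingleton, card_eq_one]
  · simp only [isCycleOn_univ_iff_cycleType_eq]
    rw [Perm.card_of_cycleType_singleton Fintype.one_lt_card le_rfl, Nat.choose_self, mul_one]

/-- The permutation acting on each block of a partition by a given permutation of that block.
It parametrizes the permutations with prescribed orbits by a choice of cycle on each block. -/
def blockwisePerm (Q : Finpartition (univ : Finset α)) (ρ : ∀ P : Q.parts, Perm P.1) : Perm α :=
  ((Equiv.subtypeUnivEquiv mem_univ).symm.trans Q.equivSigmaParts).symm.permCongr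
    (Perm.sigmaCongrRight ρ)

variable {Q : Finpartition (univ : Finset α)}

theorem blockwisePerm_apply (ρ : ∀ P : Q.parts, Perm P.1) (P : Q.parts) (a : P.1) :
    blockwisePerm Q ρ a = ρ P a := by
  have block_of_a : Q.equivSigmaParts ⟨a, mem_univ _⟩ = ⟨P, a⟩ :=
    Q.equivSigmaParts.apply_symm_apply ⟨P, a⟩
  change (Q.equivSigmaParts.symm
    (Perm.sigmaCongrRight ρ (Q.equivSigmaParts ⟨a, mem_univ _⟩)) : α) = ρ P a
  rw [block_of_a]
  rfl

theorem blockwisePerm_injective : Function.Injective (blockwisePerm Q) := by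
  intro ρ ρ' h
  funext P
  ext a
  rw [← blockwisePerm_apply, ← blockwisePerm_apply, h]

theorem blockwisePerm_apply_mem_iff (ρ : ∀ P : Q.parts, Perm P.1) (P : Q.parts) (a : α) :
    blockwisePerm Q ρ a ∈ (P.1 : Set α) ↔ a ∈ (P.1 : Set α) := by
  obtain ⟨P', hP', ha⟩ := Q.exists_mem (mem_univ a)
  have image_mem : blockwisePerm Q ρ a ∈ P' := by
    rw [blockwisePerm_apply ρ ⟨P', hP'⟩ ⟨a, ha⟩]
    exact coe_mem _
  rw [mem_coe, mem_coe, ← Q.part_eq_iff_mem P.2, ← Q.part_eq_iff_mem P.2,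
    Q.part_eq_of_mem hP' image_mem, Q.part_eq_of_mem hP' ha]

theorem isCycleOn_blockwisePerm_iff (ρ : ∀ P : Q.parts, Perm P.1) (P : Q.parts) :
    (blockwisePerm Q ρ).IsCycleOn (P.1 : Set α) ↔ (ρ P).IsCycleOn Set.univ := by
  have restriction_eq :
      (blockwisePerm Q ρ).subtypePerm (blockwisePerm_apply_mem_iff ρ P) = ρ P :=
    Equiv.ext fun a => Subtype.ext (blockwisePerm_apply ρ P a)
  rw [← restriction_eq]
  exact (isCycleOn_univ_subtypePerm_iff (blockwisePerm_apply_mem_iff ρ P)).symm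

theorem exists_blockwisePerm_eq {τ : Perm α} (h : ∀ P ∈ Q.parts, ∀ a, τ a ∈ P ↔ a ∈ P) :
    ∃ ρ, blockwisePerm Q ρ = τ := by
  refine ⟨fun P => τ.subtypePerm (h P.1 P.2), Equiv.ext fun a => ?_⟩
  obtain ⟨P, hP, ha⟩ := Q.exists_mem (mem_univ a)
  exact blockwisePerm_apply _ ⟨P, hP⟩ ⟨a, ha⟩

theorem card_orbitPartition_eq (Q : Finpartition (univ : Finset α)) :
    #{τ : Perm α | orbitPartition τ = Q} = cbar Q.parts := by
  have card_block_cycles (P : Q.parts) :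
      #{ρ : Perm P.1 | ρ.IsCycleOn Set.univ} = (#P.1 - 1).factorial := by
    have : Nonempty P.1 := (Q.nonempty_of_mem_parts P.2).to_subtype
    rw [card_isCycleOn_univ, Fintype.card_coe]
  rw [cbar, ← prod_coe_sort, ← prod_congr rfl fun P _ => card_block_cycles P,
    ← Fintype.card_piFinset]
  refine (card_nbij (blockwisePerm Q) (fun ρ hρ => ?_) blockwisePerm_injective.injOn
    fun τ hτ => ?_).symm
  · simp only [mem_coe, Fintype.mem_piFinset, mem_filter_univ, orbitPartition_eq_iff] at hρ ⊢
    exact fun P hP => (isCycleOn_blockwisePerm_iff ρ ⟨P, hP⟩).2 (hρ ⟨P, hP⟩)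
  · simp only [mem_coe, mem_filter_univ, orbitPartition_eq_iff] at hτ
    obtain ⟨ρ, rfl⟩ := exists_blockwisePerm_eq (Q := Q) fun P hP a => (hτ P hP).apply_mem_iff
    refine ⟨ρ, ?_, rfl⟩
    simp only [mem_coe, Fintype.mem_piFinset, mem_filter_univ]
    exact fun P => (isCycleOn_blockwisePerm_iff ρ P).1 (hτ P.1 P.2)

theorem sum_orbitPartition {M : Type*} [AddCommMonoid M]
    (g : Finpartition (univ : Finset α) → M) :
    ∑ τ : Perm α, g (orbitPartition τ) = ∑ Q, cbar Q.parts • g Q := by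
  rw [← sum_fiberwise' univ orbitPartition g]
  simp only [sum_const, card_orbitPartition_eq]

end CycleCounting

section FiniteIdentity

variable {r : ℕ} {β : Type*} [LinearOrder β]

theorem card_monotone_comp_eq_card_comp_eq (f : Fin r → β) :
    #{σ : Perm (Fin r) | Monotone (f ∘ σ)} = #{τ : Perm (Fin r) | f ∘ τ = f} := by
  refine card_equiv (Equiv.mulRight (Tuple.sort f)⁻¹) fun σ => ?_
  simp only [mem_filter_univ, ← Tuple.comp_sort_eq_comp_iff_monotone, coe_mulRight, Perm.coe_mul]
  exact (Equiv.comp_symm_eq (Tuple.sort f) f (f ∘ σ)).symm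

theorem sum_monotone_eq_sum_monotone_comp {R : Type*} [CommSemiring R] (s : Finset β)
    (F : Fin r → β → R) (σ : Perm (Fin r)) :
    ∑ m ∈ Fintype.piFinset (fun _ : Fin r => s) with Monotone m, ∏ i, F (σ i) (m i) =
      ∑ f ∈ Fintype.piFinset (fun _ : Fin r => s) with Monotone (f ∘ σ), ∏ i, F i (f i) := by
  refine (sum_equiv (σ.arrowCongr (Equiv.refl β)).symm (fun f => ?_) fun f _ => ?_).symm
  · simp only [mem_filter, Fintype.mem_piFinset]
    exact and_congr (σ.forall_congr_right (q := fun i => f i ∈ s)).symm Iff.rfl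
  · exact (Equiv.prod_comp σ fun i => F i (f i)).symm

theorem sum_perm_sum_monotone_comp {M : Type*} [AddCommMonoid M] (s : Finset (Fin r → β))
    (g : (Fin r → β) → M) :
    ∑ σ : Perm (Fin r), ∑ f ∈ s with Monotone (f ∘ σ), g f =
      ∑ τ : Perm (Fin r), ∑ f ∈ s with f ∘ τ = f, g f := by
  simp only [sum_filter]
  rw [sum_comm, sum_comm (s := univ)]
  refine sum_congr rfl fun f _ => ?_
  rw [← sum_filter, ← sum_filter, sum_const, sum_const, card_monotone_comp_eq_card_comp_eq]

theorem sum_perm_sum_monotone_eq_sum_finpartition {R : Type*} [CommSemiring R] (s : Finset β)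
    (F : Fin r → β → R) :
    ∑ σ : Perm (Fin r), ∑ m ∈ Fintype.piFinset (fun _ : Fin r => s) with Monotone m,
        ∏ i, F (σ i) (m i) =
      ∑ Q : Finpartition (univ : Finset (Fin r)),
        (cbar Q.parts : R) * ∏ P ∈ Q.parts, ∑ n ∈ s, ∏ p ∈ P, F p n := by
  calc ∑ σ : Perm (Fin r), ∑ m ∈ Fintype.piFinset (fun _ : Fin r => s) with Monotone m,
        ∏ i, F (σ i) (m i)
      = ∑ σ : Perm (Fin r), ∑ f ∈ Fintype.piFinset (fun _ : Fin r => s) with Monotone (f ∘ σ),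
          ∏ i, F i (f i) := sum_congr rfl fun σ _ => sum_monotone_eq_sum_monotone_comp s F σ
    _ = ∑ τ : Perm (Fin r), ∑ f ∈ Fintype.piFinset (fun _ : Fin r => s) with f ∘ τ = f,
          ∏ i, F i (f i) := sum_perm_sum_monotone_comp _ _
    _ = ∑ τ : Perm (Fin r), ∏ P ∈ (orbitPartition τ).parts, ∑ n ∈ s, ∏ p ∈ P, F p n := by
        simp only [prod_parts_sum_prod, factorsThrough_part_orbitPartition_iff]
    _ = ∑ Q : Finpartition (univ : Finset (Fin r)),
          (cbar Q.parts : R) * ∏ P ∈ Q.parts, ∑ n ∈ s, ∏ p ∈ P, F p n := by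
        simp only [← nsmul_eq_mul, ← sum_orbitPartition]

end FiniteIdentity

section ProductSeries

variable {ι β : Type*} [Fintype ι]

theorem tendsto_piFinset_const_atTop [DecidableEq ι] :
    Tendsto (fun s : Finset β => Fintype.piFinset fun _ : ι => s) atTop atTop := by
  refine tendsto_atTop_finset_of_monotone
    (fun s t hst => Fintype.piFinset_subset _ _ fun _ => hst) fun f => ⟨univ.image f, ?_⟩
  exact Fintype.mem_piFinset.2 fun a => mem_image_of_mem f (mem_univ a)

theorem summable_prod_apply {F : ι → β → ℝ} (nonneg : ∀ i b, 0 ≤ F i b)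
    (summable : ∀ i, Summable (F i)) : Summable fun f : ι → β => ∏ i, F i (f i) := by
  refine summable_of_sum_le (c := ∏ i, ∑' b, F i b) (fun f => prod_nonneg fun i _ => nonneg i _)
    fun u => ?_
  obtain ⟨s, hs⟩ := (tendsto_piFinset_const_atTop.eventually_ge_atTop u).exists
  calc ∑ f ∈ u, ∏ i, F i (f i)
      ≤ ∑ f ∈ Fintype.piFinset fun _ => s, ∏ i, F i (f i) :=
        sum_le_sum_of_subset_of_nonneg hs fun f _ _ => prod_nonneg fun i _ => nonneg i _
    _ = ∏ i, ∑ b ∈ s, F i b := (prod_univ_sum _ _).symm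
    _ ≤ ∏ i, ∑' b, F i b := prod_le_prod (fun i _ => sum_nonneg fun b _ => nonneg i b)
        fun i _ => (summable i).sum_le_tsum s fun b _ => nonneg i b

end ProductSeries

theorem summable_one_div_add_one_pow {m : ℕ} (hm : 2 ≤ m) :
    Summable fun n : ℕ => 1 / ((n : ℝ) + 1) ^ m := by
  simpa using (summable_nat_add_iff 1).2 (Real.summable_one_div_nat_pow.2 hm)

theorem tendsto_zetaVal_sum {ι : Type*} {P : Finset ι} (hP : P.Nonempty) {k : ι → ℕ}
    (hk : ∀ i ∈ P, 2 ≤ k i) :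
    Tendsto (fun s : Finset ℕ => ∑ n ∈ s, ∏ p ∈ P, 1 / ((n : ℝ) + 1) ^ k p) atTop
      (𝓝 (zetaVal (∑ p ∈ P, k p))) := by
  obtain ⟨i, hi⟩ := hP
  have two_le_sum : 2 ≤ ∑ p ∈ P, k p := (hk i hi).trans (single_le_sum_of_canonicallyOrdered hi)
  simp only [prod_div_distrib, prod_const_one, prod_pow_eq_pow_sum]
  exact (summable_one_div_add_one_pow two_le_sum).hasSum

theorem tendsto_mzsv {r : ℕ} {k : Fin r → ℕ} (hk : ∀ i, 2 ≤ k i) :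
    Tendsto (fun s : Finset ℕ => ∑ m ∈ Fintype.piFinset (fun _ : Fin r => s) with Monotone m,
      ∏ i, 1 / ((m i : ℝ) + 1) ^ k i) atTop (𝓝 (mzsv k)) := by
  have summable_tuples : Summable fun m : Fin r → ℕ => ∏ i, 1 / ((m i : ℝ) + 1) ^ k i :=
    summable_prod_apply (F := fun i (n : ℕ) => 1 / ((n : ℝ) + 1) ^ k i) (fun _ _ => by positivity)
      fun i => summable_one_div_add_one_pow (hk i)
  have hasSum_mzsv : HasSum ({m | Monotone m}.indicator fun m : Fin r → ℕ =>
      ∏ i, 1 / ((m i : ℝ) + 1) ^ k i) (mzsv k) :=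
    hasSum_subtype_iff_indicator.1 (summable_tuples.subtype {m | Monotone m}).hasSum
  refine (hasSum_mzsv.comp tendsto_piFinset_const_atTop).congr fun s => ?_
  rw [Function.comp_apply, sum_filter]
  exact sum_congr rfl fun m _ => Set.indicator_apply {m | Monotone m} _ m

/-- Shuffle symmetric-sum theorem for multiple zeta-star values in the convergent case:
for `r ≥ 1` and `k_i ≥ 2` for all `i`,
`Σ_{σ ∈ S_r} ζ*(k_{σ(1)}, …, k_{σ(r)}) = Σ_{Π ∈ P(r)} c̄(Π) ∏_{P ∈ Π} ζ(Σ_{p ∈ P} k_p)`. -/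
theorem symmetric_sum_mzsv_convergent {r : ℕ} (hr : 1 ≤ r) (k : Fin r → ℕ)
    (hk : ∀ i, 2 ≤ k i) :
    ∑ σ : Equiv.Perm (Fin r), mzsv (fun i => k (σ i)) =
      ∑ π ∈ partitionsOf (Finset.univ : Finset (Fin r)),
        (cbar π : ℝ) * ∏ P ∈ π, zetaVal (∑ p ∈ P, k p) := by
  have tendsto_lhs := tendsto_finsetSum (univ : Finset (Perm (Fin r))) fun σ _ =>
    tendsto_mzsv fun i => hk (σ i)
  have tendsto_rhs := tendsto_finsetSum (univ : Finset (Finpartition univ)) fun Q _ =>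
    (tendsto_finsetProd Q.parts fun P hP =>
      tendsto_zetaVal_sum (Q.nonempty_of_mem_parts hP) fun i _ => hk i).const_mul (cbar Q.parts : ℝ)
  rw [sum_partitionsOf]
  refine tendsto_nhds_unique tendsto_lhs (tendsto_rhs.congr fun s => ?_)
  exact (sum_perm_sum_monotone_eq_sum_finpartition s fun i n => 1 / ((n : ℝ) + 1) ^ k i).symm
end

section
/- Let r ≥ 1 and let B be a proper subset of {1,…,r}. Then for every partition Π ∈ P(r) there exists a unique triple (A, Ξ, Δ) with A ⊆ B, Ξ a partition of A, and Δ ∈ P_B({1,…,r}∖A), such that the set of blocks of Π is the disjoint union of the set of blocks of Ξ and the set of blocks of Δ; conversely, for every such triple (A, Ξ, Δ), the union of the blocks of Ξ and of Δ forms a partition of {1,…,r}. (Here A may be empty, in which case Ξ is the empty set of blocks.) -/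
open Finset

open scoped Classical

/-- `P_B(C)`: the set of partitions of `C` none of whose blocks is contained in `B`. -/
noncomputable def partitionsAvoiding {α : Type*} [DecidableEq α] (B C : Finset α) :
    Finset (Finset (Finset α)) :=
  (partitionsOf C).filter (fun Δ => ∀ Q ∈ Δ, ¬ Q ⊆ B)

/-!
The block sets are forced: a block of `Ξ` lies in `A ⊆ B`, a block of `Δ` does not lie in `B`, so
`Ξ` consists of the blocks of `Π` contained in `B`, `Δ` of the remaining ones, and `A` is the union
of `Ξ`. This choice works because the blocks of `Π` are pairwise disjoint, which makes
the blocks outside `Ξ` cover exactly the complement of `A`.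
-/

section PartitionDecomposition

variable {α : Type*} [DecidableEq α] {S T A B C P : Finset α} {π ρ Ξ Δ : Finset (Finset α)}

theorem mem_partitionsOf :
    π ∈ partitionsOf S ↔
      (∀ P ∈ π, P.Nonempty) ∧ (π : Set (Finset α)).PairwiseDisjoint id ∧ π.biUnion id = S := by
  refine mem_filter.trans ⟨?_, ?_⟩
  · rintro ⟨-, nonempty, disjoint, cover⟩
    exact ⟨nonempty, fun P hP Q hQ hPQ => disjoint P hP Q hQ hPQ, cover⟩
  · rintro ⟨nonempty, disjoint, rfl⟩
    exact ⟨mem_powerset.2 fun P hP => mem_powerset.2 (subset_biUnion_of_mem id hP),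
      nonempty, fun P hP Q hQ hPQ => disjoint hP hQ hPQ, rfl⟩

theorem mem_partitionsAvoiding :
    Δ ∈ partitionsAvoiding B C ↔ Δ ∈ partitionsOf C ∧ ∀ Q ∈ Δ, ¬ Q ⊆ B :=
  mem_filter

theorem subset_of_mem_of_mem_partitionsOf (hπ : π ∈ partitionsOf S) (hP : P ∈ π) : P ⊆ S :=
  (mem_partitionsOf.1 hπ).2.2 ▸ subset_biUnion_of_mem id hP

theorem mem_partitionsOf_biUnion_of_subset (hπ : π ∈ partitionsOf S) (hρ : ρ ⊆ π) :
    ρ ∈ partitionsOf (ρ.biUnion id) := by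
  obtain ⟨nonempty, disjoint, -⟩ := mem_partitionsOf.1 hπ
  exact mem_partitionsOf.2
    ⟨fun P hP => nonempty P (hρ hP), disjoint.subset (coe_subset.2 hρ), rfl⟩

theorem sdiff_mem_partitionsOf (hπ : π ∈ partitionsOf S) (hρ : ρ ⊆ π) :
    π \ ρ ∈ partitionsOf (S \ ρ.biUnion id) := by
  obtain ⟨-, disjoint, rfl⟩ := mem_partitionsOf.1 hπ
  have disjoint_covers : Disjoint (ρ.biUnion id) ((π \ ρ).biUnion id) := by
    refine (disjoint_biUnion_left _ _ _).2 fun P hP =>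
      (disjoint_biUnion_right _ _ _).2 fun Q hQ => ?_
    obtain ⟨hQπ, hQρ⟩ := mem_sdiff.1 hQ
    exact disjoint (hρ hP) hQπ (ne_of_mem_of_not_mem hP hQρ)
  have cover_sdiff : π.biUnion id \ ρ.biUnion id = (π \ ρ).biUnion id := by
    rw [← union_sdiff_cancel_left disjoint_covers, ← union_biUnion, union_sdiff_of_subset hρ]
  exact cover_sdiff ▸ mem_partitionsOf_biUnion_of_subset hπ sdiff_subset

theorem union_mem_partitionsOf (hST : Disjoint S T) (hΞ : Ξ ∈ partitionsOf S)
    (hΔ : Δ ∈ partitionsOf T) : Ξ ∪ Δ ∈ partitionsOf (S ∪ T) := by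
  obtain ⟨nonempty_Ξ, disjoint_Ξ, cover_Ξ⟩ := mem_partitionsOf.1 hΞ
  obtain ⟨nonempty_Δ, disjoint_Δ, cover_Δ⟩ := mem_partitionsOf.1 hΔ
  refine mem_partitionsOf.2 ⟨?_, ?_, ?_⟩
  · exact fun P hP => (mem_union.1 hP).elim (nonempty_Ξ P) (nonempty_Δ P)
  · rw [coe_union]
    exact disjoint_Ξ.union disjoint_Δ fun P hP Q hQ _ =>
      hST.mono (subset_of_mem_of_mem_partitionsOf hΞ hP) (subset_of_mem_of_mem_partitionsOf hΔ hQ)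
  · rw [union_biUnion, cover_Ξ, cover_Δ]

theorem union_mem_partitionsOf_of_subset (hAS : A ⊆ S) (hΞ : Ξ ∈ partitionsOf A)
    (hΔ : Δ ∈ partitionsOf (S \ A)) : Ξ ∪ Δ ∈ partitionsOf S :=
  union_sdiff_of_subset hAS ▸ union_mem_partitionsOf disjoint_sdiff hΞ hΔ

theorem filter_subset_mem_partitionsOf (B : Finset α) (hπ : π ∈ partitionsOf S) :
    {P ∈ π | P ⊆ B} ∈ partitionsOf ({P ∈ π | P ⊆ B}.biUnion id) :=
  mem_partitionsOf_biUnion_of_subset hπ (filter_subset _ _)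

theorem filter_not_subset_mem_partitionsAvoiding (B : Finset α) (hπ : π ∈ partitionsOf S) :
    {P ∈ π | ¬ P ⊆ B} ∈ partitionsAvoiding B (S \ {P ∈ π | P ⊆ B}.biUnion id) := by
  refine mem_partitionsAvoiding.2 ⟨?_, fun Q hQ => (mem_filter.1 hQ).2⟩
  rw [filter_not]
  exact sdiff_mem_partitionsOf hπ (filter_subset _ _)

theorem filter_subset_union_eq_left (hΞ : ∀ P ∈ Ξ, P ⊆ B) (hΔ : ∀ Q ∈ Δ, ¬ Q ⊆ B) :
    {P ∈ Ξ ∪ Δ | P ⊆ B} = Ξ := by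
  rw [filter_union, filter_true_of_mem hΞ, filter_false_of_mem hΔ, union_empty]

theorem filter_not_subset_union_eq_right (hΞ : ∀ P ∈ Ξ, P ⊆ B) (hΔ : ∀ Q ∈ Δ, ¬ Q ⊆ B) :
    {P ∈ Ξ ∪ Δ | ¬ P ⊆ B} = Δ := by
  rw [filter_union, filter_false_of_mem fun P hP => not_not_intro (hΞ P hP),
    filter_true_of_mem hΔ, empty_union]

theorem existsUnique_partition_decomposition (B : Finset α) (hπ : π ∈ partitionsOf S) :
    ∃! AΞΔ : Finset α × Finset (Finset α) × Finset (Finset α),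
      AΞΔ.1 ⊆ B ∧
      AΞΔ.2.1 ∈ partitionsOf AΞΔ.1 ∧
      AΞΔ.2.2 ∈ partitionsAvoiding B (S \ AΞΔ.1) ∧
      Disjoint AΞΔ.2.1 AΞΔ.2.2 ∧
      π = AΞΔ.2.1 ∪ AΞΔ.2.2 := by
  refine ⟨({P ∈ π | P ⊆ B}.biUnion id, {P ∈ π | P ⊆ B}, {P ∈ π | ¬ P ⊆ B}), ?_, ?_⟩
  · exact ⟨biUnion_subset.2 fun P hP => (mem_filter.1 hP).2,
      filter_subset_mem_partitionsOf B hπ,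
      filter_not_subset_mem_partitionsAvoiding B hπ,
      disjoint_filter_filter_not π π (· ⊆ B),
      (filter_union_filter_not_eq (· ⊆ B) π).symm⟩
  · rintro ⟨A, Ξ, Δ⟩ ⟨hAB, hΞ, hΔ, -, rfl⟩
    have blocks_subset : ∀ P ∈ Ξ, P ⊆ B := fun P hP =>
      (subset_of_mem_of_mem_partitionsOf hΞ hP).trans hAB
    have blocks_not_subset := (mem_partitionsAvoiding.1 hΔ).2
    have cover_Ξ : Ξ.biUnion id = A := (mem_partitionsOf.1 hΞ).2.2
    rw [filter_subset_union_eq_left blocks_subset blocks_not_subset,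
      filter_not_subset_union_eq_right blocks_subset blocks_not_subset, cover_Ξ]

theorem partition_decomposition_general (hBS : B ⊆ S) :
    (∀ π ∈ partitionsOf S,
      ∃! AΞΔ : Finset α × Finset (Finset α) × Finset (Finset α),
        AΞΔ.1 ⊆ B ∧
        AΞΔ.2.1 ∈ partitionsOf AΞΔ.1 ∧
        AΞΔ.2.2 ∈ partitionsAvoiding B (S \ AΞΔ.1) ∧
        Disjoint AΞΔ.2.1 AΞΔ.2.2 ∧
        π = AΞΔ.2.1 ∪ AΞΔ.2.2) ∧
    (∀ (A : Finset α) (Ξ Δ : Finset (Finset α)),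
      A ⊆ B → Ξ ∈ partitionsOf A → Δ ∈ partitionsAvoiding B (S \ A) →
      Ξ ∪ Δ ∈ partitionsOf S) :=
  ⟨fun _ hπ => existsUnique_partition_decomposition B hπ, fun _ _ _ hAB hΞ hΔ =>
    union_mem_partitionsOf_of_subset (hAB.trans hBS) hΞ (mem_partitionsAvoiding.1 hΔ).1⟩

end PartitionDecomposition

/-- Decomposition of partitions of `{1,…,r}` relative to a proper subset `B`:
every partition `Π` of `{1,…,r}` arises, in exactly one way, as the disjoint union of the
blocks of a partition `Ξ` of some `A ⊆ B` together with the blocks of a partition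
`Δ ∈ P_B({1,…,r}∖A)`; conversely every such pair assembles to a partition of `{1,…,r}`. -/
theorem partition_decomposition {r : ℕ} (hr : 1 ≤ r) (B : Finset (Fin r))
    (hB : B ⊂ Finset.univ) :
    (∀ π ∈ partitionsOf (Finset.univ : Finset (Fin r)),
      ∃! AΞΔ : Finset (Fin r) × Finset (Finset (Fin r)) × Finset (Finset (Fin r)),
        AΞΔ.1 ⊆ B ∧
        AΞΔ.2.1 ∈ partitionsOf AΞΔ.1 ∧
        AΞΔ.2.2 ∈ partitionsAvoiding B (Finset.univ \ AΞΔ.1) ∧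
        Disjoint AΞΔ.2.1 AΞΔ.2.2 ∧
        π = AΞΔ.2.1 ∪ AΞΔ.2.2) ∧
    (∀ (A : Finset (Fin r)) (Ξ Δ : Finset (Finset (Fin r))),
      A ⊆ B → Ξ ∈ partitionsOf A → Δ ∈ partitionsAvoiding B (Finset.univ \ A) →
      Ξ ∪ Δ ∈ partitionsOf (Finset.univ : Finset (Fin r))) :=
  partition_decomposition_general hB.subset
end
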